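/- arXiv:2410.10649 — 3 statements merged into one kernel-verified Lean document; each statement's English description precedes it below -/
import Mathlib

section
/- Let d ≥ 1, l ∈ ℕ, Ω = [0,1]^d, m = C(l+d, l), and let A = {w_1, …, w_m} ⊂ Ω. Then A is a norming set for 𝒫_l(Ω) with some finite norming constant if and only if the Vandermonde matrix V_A is invertible. Moreover, there exists a constant C₀ ≥ 1 depending only on d and l (not on A) such that whenever these equivalent conditions hold, the minimal norming constant c_N of A and the smallest singular value c_S of V_A satisfy C₀⁻¹ c_N ≤ c_S⁻¹ ≤ C₀ c_N. -/
open Matrix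

noncomputable section

/-- Degree-then-lexicographic strict order on multi-indices in ℕ^d. -/
def degLex {d : ℕ} (k k' : Fin d → ℕ) : Prop :=
  (∑ j, k j < ∑ j, k' j) ∨
    ((∑ j, k j = ∑ j, k' j) ∧ ∃ i : Fin d, k i < k' i ∧ ∀ j : Fin d, j < i → k j = k' j)

/-- `kE` enumerates all multi-indices of ℕ^d in increasing degree-then-lex order. -/
def IsMultiIndexEnum (d : ℕ) (kE : ℕ → Fin d → ℕ) : Prop :=
  Function.Bijective kE ∧ ∀ i j : ℕ, i < j → degLex (kE i) (kE j)

/-- The vector `v_x = (x^{k_{(1)}}, …, x^{k_{(m)}})ᵀ`. -/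
def vVec {d : ℕ} (kE : ℕ → Fin d → ℕ) (m : ℕ) (x : Fin d → ℝ) : Fin m → ℝ :=
  fun i => ∏ t, x t ^ kE (i : ℕ) t

/-- The Vandermonde matrix `V_A` with entries `V_A[i,j] = (w_j)^{k_{(i)}}`. -/
def vand {d : ℕ} (kE : ℕ → Fin d → ℕ) (m : ℕ) (w : Fin m → Fin d → ℝ) :
    Matrix (Fin m) (Fin m) ℝ :=
  Matrix.of fun i j => ∏ t, w j t ^ kE (i : ℕ) t

/-- The unit cube `[0,1]^d`. -/
def unitCube (d : ℕ) : Set (Fin d → ℝ) := {x | ∀ t, 0 ≤ x t ∧ x t ≤ 1}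

/-- `A = {w_1,…,w_m}` is a norming set for `𝒫_l(Ω)` with norming constant `c`. -/
def IsNorming {d : ℕ} (l : ℕ) (Ω : Set (Fin d → ℝ)) {m : ℕ}
    (w : Fin m → Fin d → ℝ) (c : ℝ) : Prop :=
  ∀ P : MvPolynomial (Fin d) ℝ, P.totalDegree ≤ l →
    ∀ x ∈ Ω, |MvPolynomial.eval x P| ≤ c * ⨆ i : Fin m, |MvPolynomial.eval (w i) P|

/-- Smallest singular value of a square real matrix:
`σ_min(M) = min_{‖u‖₂ = 1} ‖M u‖₂`. -/
def singMin {m : ℕ} (M : Matrix (Fin m) (Fin m) ℝ) : ℝ :=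
  sInf {y : ℝ | ∃ u : Fin m → ℝ, ∑ i, u i ^ 2 = 1 ∧
    y = Real.sqrt (∑ i, (M *ᵥ u) i ^ 2)}

/-! ### Multi-indices of bounded degree -/

/-- Multi-indices in `d` variables of degree at most `l` are multi-indices in `d + 1` variables of
degree exactly `l`. -/
def multiIndexHomogenize (d l : ℕ) :
    {k : Fin d → ℕ // ∑ j, k j ≤ l} ≃ {k : Fin (d + 1) → ℕ // ∑ j, k j = l} where
  toFun k := ⟨Fin.cons (l - ∑ j, k.1 j) k.1, by
    have := k.2
    simp only [Fin.sum_univ_succ, Fin.cons_zero, Fin.cons_succ]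
    omega⟩
  invFun k := ⟨Fin.tail k.1, by
    have := k.2
    rw [Fin.sum_univ_succ] at this
    simp only [Fin.tail]
    omega⟩
  left_inv k := by simp
  right_inv k := by
    have := k.2
    rw [Fin.sum_univ_succ] at this
    ext j
    refine Fin.cases ?_ (fun j => ?_) j
    · simp only [Fin.cons_zero, Fin.tail]
      omega
    · simp [Fin.tail]

theorem natCard_multiIndex_degree_le (d l : ℕ) :
    Nat.card {k : Fin d → ℕ // ∑ j, k j ≤ l} = (l + d).choose l := by
  rw [Nat.card_congr ((multiIndexHomogenize d l).trans (Sym.equivNatSumOfFintype _ l).symm),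
    Nat.card_eq_fintype_card, Sym.card_sym_eq_choose, Fintype.card_fin]
  congr 1
  omega

theorem Nat.eq_Iio_ncard_of_isLowerSet {S : Set ℕ} (hS : IsLowerSet S) (hfin : S.Finite) :
    S = Set.Iio S.ncard := by
  refine Set.eq_of_subset_of_ncard_le (fun i hi => ?_) ?_ (Set.finite_Iio _)
  · have hle := Set.ncard_le_ncard (s := Set.Iic i) (fun j hj => hS hj hi) hfin
    rw [Set.ncard_eq_toFinset_card'] at hle
    simpa [Nat.succ_le_iff] using hle
  · simp [Set.ncard_eq_toFinset_card']

theorem IsMultiIndexEnum.degree_le_iff {d : ℕ} {kE : ℕ → Fin d → ℕ} (hkE : IsMultiIndexEnum d kE)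
    (l i : ℕ) : ∑ j, kE i j ≤ l ↔ i < (l + d).choose l := by
  have hlower : IsLowerSet {i | ∑ j, kE i j ≤ l} := by
    intro i i' hle hi
    rcases hle.eq_or_lt with rfl | hlt
    · exact hi
    · rcases hkE.2 _ _ hlt with h | h
      · exact h.le.trans hi
      · exact h.1.le.trans hi
  have hcard : Nat.card {i | ∑ j, kE i j ≤ l} = (l + d).choose l := by
    rw [← natCard_multiIndex_degree_le]
    exact Nat.card_congr ((Equiv.ofBijective kE hkE.1).subtypeEquiv fun _ => Iff.rfl)
  have hfin : {i | ∑ j, kE i j ≤ l}.Finite := by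
    refine Nat.finite_of_card_ne_zero ?_
    rw [hcard]
    exact (Nat.choose_pos (Nat.le_add_right l d)).ne'
  have := Nat.eq_Iio_ncard_of_isLowerSet hlower hfin
  rw [← Nat.card_coe_set_eq, hcard] at this
  exact Set.ext_iff.1 this i

/-! ### Polynomials with prescribed coefficients -/

/-- The polynomial whose coefficient at the `i`-th multi-index is `a i`. -/
def polyOfCoeffs {d : ℕ} (kE : ℕ → Fin d → ℕ) {m : ℕ} (a : Fin m → ℝ) :
    MvPolynomial (Fin d) ℝ :=
  ∑ i : Fin m, MvPolynomial.monomial (Finsupp.equivFunOnFinite.symm (kE i)) (a i)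

theorem eval_polyOfCoeffs {d : ℕ} (kE : ℕ → Fin d → ℕ) {m : ℕ} (a : Fin m → ℝ) (x : Fin d → ℝ) :
    MvPolynomial.eval x (polyOfCoeffs kE a) = vVec kE m x ⬝ᵥ a := by
  simp [polyOfCoeffs, MvPolynomial.eval_monomial, vVec, dotProduct, Finsupp.prod_fintype, mul_comm]

theorem eval_polyOfCoeffs_eq_vand {d : ℕ} (kE : ℕ → Fin d → ℕ) {m : ℕ} (w : Fin m → Fin d → ℝ)
    (a : Fin m → ℝ) (j : Fin m) :
    MvPolynomial.eval (w j) (polyOfCoeffs kE a) = ((vand kE m w)ᵀ *ᵥ a) j :=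
  eval_polyOfCoeffs kE a (w j)

theorem coeff_polyOfCoeffs {d : ℕ} {kE : ℕ → Fin d → ℕ} (hkE : Function.Injective kE) {m : ℕ}
    (a : Fin m → ℝ) (i : Fin m) :
    (polyOfCoeffs kE a).coeff (Finsupp.equivFunOnFinite.symm (kE i)) = a i := by
  simp [polyOfCoeffs, MvPolynomial.coeff_sum, MvPolynomial.coeff_monomial, hkE.eq_iff,
    Fin.val_inj]

theorem totalDegree_polyOfCoeffs_le {d : ℕ} {kE : ℕ → Fin d → ℕ} {m l : ℕ}
    (hdeg : ∀ i < m, ∑ j, kE i j ≤ l) (a : Fin m → ℝ) :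
    (polyOfCoeffs kE a).totalDegree ≤ l := by
  refine MvPolynomial.totalDegree_finsetSum_le (R := ℝ) fun i _ => ?_
  refine (MvPolynomial.totalDegree_monomial_le _ _).trans ?_
  simpa [Finsupp.sum_fintype] using hdeg i i.2

theorem exists_eq_polyOfCoeffs {d l : ℕ} {kE : ℕ → Fin d → ℕ} (hkE : IsMultiIndexEnum d kE)
    {P : MvPolynomial (Fin d) ℝ} (hP : P.totalDegree ≤ l) :
    ∃ a : Fin ((l + d).choose l) → ℝ, P = polyOfCoeffs kE a := by
  refine ⟨fun i => P.coeff (Finsupp.equivFunOnFinite.symm (kE i)), ?_⟩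
  ext k
  obtain ⟨n, hn⟩ := hkE.1.2 k
  obtain rfl : Finsupp.equivFunOnFinite.symm (kE n) = k := by ext; simp [hn]
  by_cases hlt : n < (l + d).choose l
  · exact (coeff_polyOfCoeffs hkE.1.1
      (fun i => P.coeff (Finsupp.equivFunOnFinite.symm (kE i))) ⟨n, hlt⟩).symm
  · have hdeg : l < ∑ j, kE n j := by
      rw [← not_le, hkE.degree_le_iff]
      exact hlt
    have hzero : ∀ Q : MvPolynomial (Fin d) ℝ, Q.totalDegree ≤ l →
        Q.coeff (Finsupp.equivFunOnFinite.symm (kE n)) = 0 := fun Q hQ =>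
      MvPolynomial.coeff_eq_zero_of_totalDegree_lt <| by
        rw [Finset.sum_subset (Finset.subset_univ _) (by simp)]
        exact hQ.trans_lt (by simpa using hdeg)
    rw [hzero _ hP, hzero _ (totalDegree_polyOfCoeffs_le
      (fun i hi => (hkE.degree_le_iff l i).2 hi) _)]

theorem MvPolynomial.eq_zero_of_eval_unitCube_eq_zero {d : ℕ} {P : MvPolynomial (Fin d) ℝ}
    (h : ∀ x ∈ unitCube d, MvPolynomial.eval x P = 0) : P = 0 :=
  MvPolynomial.funext_set (fun _ => Set.Icc (0 : ℝ) 1) (fun _ => Set.Icc_infinite one_pos)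
    fun x hx => by simpa using h x fun t => hx t trivial

theorem polyOfCoeffs_eq_zero_of_eval_unitCube {d : ℕ} {kE : ℕ → Fin d → ℕ}
    (hkE : Function.Injective kE) {m : ℕ} {a : Fin m → ℝ}
    (h : ∀ x ∈ unitCube d, MvPolynomial.eval x (polyOfCoeffs kE a) = 0) : a = 0 := by
  ext i
  rw [← coeff_polyOfCoeffs hkE a i, MvPolynomial.eq_zero_of_eval_unitCube_eq_zero h]
  simp

theorem isCompact_unitCube (d : ℕ) : IsCompact (unitCube d) := by
  convert isCompact_univ_pi (fun _ : Fin d => isCompact_Icc (a := (0 : ℝ)) (b := 1)) using 1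
  ext x
  simp [unitCube, Pi.le_def, forall_and]

/-- On the unit cube the sup norm of a polynomial dominates the Euclidean norm of its
coefficients. -/
theorem exists_norm_coeffs_le_of_eval_le {d : ℕ} {kE : ℕ → Fin d → ℕ}
    (hkE : Function.Injective kE) (m : ℕ) :
    ∃ K : ℝ, 0 < K ∧ ∀ (a : EuclideanSpace ℝ (Fin m)) (B : ℝ), 0 ≤ B →
      (∀ x ∈ unitCube d, |MvPolynomial.eval x (polyOfCoeffs kE a.ofLp)| ≤ B) → ‖a‖ ≤ K * B := by
  have : CompactSpace (unitCube d) := isCompact_iff_compactSpace.1 (isCompact_unitCube d)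
  let L : EuclideanSpace ℝ (Fin m) →ₗ[ℝ] C(unitCube d, ℝ) :=
    { toFun := fun a => ⟨fun x => MvPolynomial.eval x.1 (polyOfCoeffs kE a.ofLp),
        (MvPolynomial.continuous_eval _).comp continuous_subtype_val⟩
      map_add' := fun a b => by ext x; simp [eval_polyOfCoeffs, dotProduct_add]
      map_smul' := fun c a => by ext x; simp [eval_polyOfCoeffs, dotProduct_smul] }
  have hL : LinearMap.ker L = ⊥ := by
    refine LinearMap.ker_eq_bot'.2 fun a ha => ?_
    have := polyOfCoeffs_eq_zero_of_eval_unitCube hkE (a := a.ofLp)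
      fun x hx => DFunLike.congr_fun ha ⟨x, hx⟩
    ext i
    exact congrFun this i
  obtain ⟨K, hK, hanti⟩ := L.exists_antilipschitzWith hL
  refine ⟨K, hK, fun a B hB h => ?_⟩
  calc ‖a‖ ≤ K * ‖L a‖ := hanti.le_mul_norm (map_zero L) a
    _ ≤ K * B := by
      gcongr
      exact (ContinuousMap.norm_le _ hB).2 fun x => h x.1 x.2

/-! ### The smallest singular value -/

open scoped Matrix.Norms.L2Operator

theorem Matrix.l2_opNorm_transpose_real {m : ℕ} (M : Matrix (Fin m) (Fin m) ℝ) : ‖Mᵀ‖ = ‖M‖ := by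
  rw [← Matrix.conjTranspose_eq_transpose_of_trivial, Matrix.l2_opNorm_conjTranspose]

theorem inv_singMin_eq_norm_inv {m : ℕ} (hm : 0 < m) {M : Matrix (Fin m) (Fin m) ℝ}
    (hM : IsUnit M.det) : (singMin M)⁻¹ = ‖M⁻¹‖ := by
  have : Nonempty (Fin m) := ⟨⟨0, hm⟩⟩
  have hpos : 0 < ‖M⁻¹‖ := norm_pos_iff.2 fun h => by
    have := Matrix.mul_nonsing_inv M hM
    rw [h, mul_zero] at this
    exact zero_ne_one this
  have hset : {y : ℝ | ∃ u : Fin m → ℝ, ∑ i, u i ^ 2 = 1 ∧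
      y = Real.sqrt (∑ i, (M *ᵥ u) i ^ 2)} =
      {y : ℝ | ∃ u : Fin m → ℝ, ‖WithLp.toLp 2 u‖ = 1 ∧ y = ‖WithLp.toLp 2 (M *ᵥ u)‖} := by
    simp [EuclideanSpace.norm_eq]
  rw [singMin, hset]
  set S := {y : ℝ | ∃ u : Fin m → ℝ, ‖WithLp.toLp 2 u‖ = 1 ∧ y = ‖WithLp.toLp 2 (M *ᵥ u)‖}
  have hbdd : BddBelow S := ⟨0, by rintro _ ⟨u, -, rfl⟩; exact norm_nonneg _⟩
  have hne : S.Nonempty := by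
    obtain ⟨u, hu⟩ := exists_norm_eq (EuclideanSpace ℝ (Fin m)) zero_le_one
    exact ⟨_, u.ofLp, hu, rfl⟩
  have hlow : ‖M⁻¹‖⁻¹ ≤ sInf S := by
    refine le_csInf hne ?_
    rintro _ ⟨u, hu, rfl⟩
    have := Matrix.l2_opNorm_mulVec M⁻¹ (WithLp.toLp 2 (M *ᵥ u))
    simp only [Matrix.mulVec_mulVec, Matrix.nonsing_inv_mul M hM, Matrix.one_mulVec] at this
    rw [inv_le_iff_one_le_mul₀' hpos]
    exact hu.symm.le.trans this
  have hσ : 0 < sInf S := (inv_pos.2 hpos).trans_le hlow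
  refine le_antisymm (inv_le_of_inv_le₀ hpos hlow) ?_
  rw [Matrix.l2_opNorm_def]
  refine ContinuousLinearMap.opNorm_le_bound _ (inv_nonneg.2 hσ.le) fun y => ?_
  change ‖WithLp.toLp 2 (M⁻¹ *ᵥ y.ofLp)‖ ≤ _
  set u : EuclideanSpace ℝ (Fin m) := WithLp.toLp 2 (M⁻¹ *ᵥ y.ofLp) with hu
  have hMu : M *ᵥ u.ofLp = y.ofLp := by
    simp [hu, Matrix.mulVec_mulVec, Matrix.mul_nonsing_inv M hM]
  rcases eq_or_ne u 0 with h0 | h0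
  · rw [h0, norm_zero]
    positivity
  · have hu0 : 0 < ‖u‖ := norm_pos_iff.2 h0
    have := csInf_le hbdd (⟨(‖u‖⁻¹ • u).ofLp, by simp [norm_smul, hu0.ne'], rfl⟩ :
      ‖WithLp.toLp 2 (M *ᵥ (‖u‖⁻¹ • u).ofLp)‖ ∈ S)
    rw [WithLp.ofLp_smul, Matrix.mulVec_smul, hMu, WithLp.toLp_smul, WithLp.toLp_ofLp, norm_smul,
      norm_inv, norm_norm, le_inv_mul_iff₀ hu0] at this
    rw [le_inv_mul_iff₀ hσ, mul_comm]
    exact this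

/-! ### Comparison of the two constants -/

theorem IsNorming.one_le {d l m : ℕ} {w : Fin m → Fin d → ℝ} (hm : 0 < m) {c : ℝ}
    (hc : IsNorming l (unitCube d) w c) : 1 ≤ c := by
  have : Nonempty (Fin m) := ⟨⟨0, hm⟩⟩
  simpa using hc 1 (by simp) 0 fun t => by simp

theorem IsNorming.isUnit_det_vand {d l m : ℕ} {kE : ℕ → Fin d → ℕ} (hkE : Function.Injective kE)
    (hdeg : ∀ i < m, ∑ j, kE i j ≤ l) {w : Fin m → Fin d → ℝ} {c : ℝ}
    (hc : IsNorming l (unitCube d) w c) : IsUnit (vand kE m w).det := by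
  rw [isUnit_iff_ne_zero, ← Matrix.det_transpose]
  intro hdet
  obtain ⟨a, ha, h0⟩ := Matrix.exists_mulVec_eq_zero_iff.2 hdet
  refine ha (polyOfCoeffs_eq_zero_of_eval_unitCube hkE fun x hx => ?_)
  have := hc _ (totalDegree_polyOfCoeffs_le hdeg a) x hx
  simpa [eval_polyOfCoeffs_eq_vand, h0] using this

theorem norm_vVec_le {d m : ℕ} (kE : ℕ → Fin d → ℕ) {x : Fin d → ℝ} (hx : x ∈ unitCube d) :
    ‖WithLp.toLp 2 (vVec kE m x)‖ ≤ √m := by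
  rw [EuclideanSpace.norm_eq]
  refine Real.sqrt_le_sqrt ?_
  calc ∑ i, ‖vVec kE m x i‖ ^ 2 ≤ ∑ _i : Fin m, (1 : ℝ) := by
        refine Finset.sum_le_sum fun i _ => pow_le_one₀ (norm_nonneg _) ?_
        rw [vVec, norm_prod]
        refine Finset.prod_le_one (fun _ _ => norm_nonneg _) fun t _ => ?_
        rw [norm_pow, Real.norm_of_nonneg (hx t).1]
        exact pow_le_one₀ (hx t).1 (hx t).2
    _ = m := by simp

theorem norm_toLp_le_sqrt_mul_iSup {m : ℕ} (y : Fin m → ℝ) :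
    ‖WithLp.toLp 2 y‖ ≤ √m * ⨆ i, |y i| := by
  have h0 : 0 ≤ ⨆ i, |y i| := Real.iSup_nonneg fun _ => abs_nonneg _
  rw [EuclideanSpace.norm_eq, ← Real.sqrt_sq h0, ← Real.sqrt_mul (Nat.cast_nonneg m)]
  refine Real.sqrt_le_sqrt ?_
  calc ∑ i, ‖y i‖ ^ 2 ≤ ∑ _i : Fin m, (⨆ i, |y i|) ^ 2 := by
        refine Finset.sum_le_sum fun i _ => ?_
        gcongr
        exact le_ciSup (f := fun i => |y i|) (Set.finite_range _).bddAbove i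
    _ = m * (⨆ i, |y i|) ^ 2 := by simp

theorem isNorming_card_mul_norm_inv_vand {d l m : ℕ} {kE : ℕ → Fin d → ℕ}
    (hspan : ∀ P : MvPolynomial (Fin d) ℝ, P.totalDegree ≤ l →
      ∃ a : Fin m → ℝ, P = polyOfCoeffs kE a)
    {w : Fin m → Fin d → ℝ} (hV : IsUnit (vand kE m w).det) :
    IsNorming l (unitCube d) w (m * ‖(vand kE m w)⁻¹‖) := by
  intro P hP x hx
  obtain ⟨a, rfl⟩ := hspan P hP
  simp only [eval_polyOfCoeffs_eq_vand]
  set V := vand kE m w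
  have hVt : IsUnit Vᵀ.det := by rwa [Matrix.det_transpose]
  have ha : ‖WithLp.toLp 2 a‖ ≤ ‖V⁻¹‖ * ‖WithLp.toLp 2 (Vᵀ *ᵥ a)‖ := by
    have := Matrix.l2_opNorm_mulVec (Vᵀ)⁻¹ (WithLp.toLp 2 (Vᵀ *ᵥ a))
    simp only [Matrix.mulVec_mulVec, Matrix.nonsing_inv_mul _ hVt, Matrix.one_mulVec] at this
    rwa [← Matrix.transpose_nonsing_inv, Matrix.l2_opNorm_transpose_real] at this
  have hinner : |vVec kE m x ⬝ᵥ a| ≤ ‖WithLp.toLp 2 (vVec kE m x)‖ * ‖WithLp.toLp 2 a‖ := by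
    have := abs_real_inner_le_norm (WithLp.toLp 2 a) (WithLp.toLp 2 (vVec kE m x))
    rw [EuclideanSpace.inner_toLp_toLp, star_trivial, mul_comm] at this
    exact this
  calc |MvPolynomial.eval x (polyOfCoeffs kE a)|
      ≤ ‖WithLp.toLp 2 (vVec kE m x)‖ * ‖WithLp.toLp 2 a‖ := by rwa [eval_polyOfCoeffs]
    _ ≤ √m * (‖V⁻¹‖ * (√m * ⨆ i, |(Vᵀ *ᵥ a) i|)) := by
        gcongr
        · exact norm_vVec_le kE hx
        · refine ha.trans ?_
          gcongr
          exact norm_toLp_le_sqrt_mul_iSup _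
    _ = √m * √m * ‖V⁻¹‖ * ⨆ i, |(Vᵀ *ᵥ a) i| := by ring
    _ = m * ‖V⁻¹‖ * ⨆ i, |(Vᵀ *ᵥ a) i| := by rw [Real.mul_self_sqrt (Nat.cast_nonneg m)]

theorem IsNorming.norm_inv_vand_le {d l m : ℕ} {kE : ℕ → Fin d → ℕ} {K : ℝ} (hK : 0 ≤ K)
    (hcoeff : ∀ (a : EuclideanSpace ℝ (Fin m)) (B : ℝ), 0 ≤ B →
      (∀ x ∈ unitCube d, |MvPolynomial.eval x (polyOfCoeffs kE a.ofLp)| ≤ B) → ‖a‖ ≤ K * B)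
    (hdeg : ∀ i < m, ∑ j, kE i j ≤ l) {w : Fin m → Fin d → ℝ} {c : ℝ} (hc0 : 0 ≤ c)
    (hc : IsNorming l (unitCube d) w c) (hV : IsUnit (vand kE m w).det) :
    ‖(vand kE m w)⁻¹‖ ≤ K * c := by
  set V := vand kE m w with hVdef
  have hVt : IsUnit Vᵀ.det := by rwa [Matrix.det_transpose]
  rw [← Matrix.l2_opNorm_transpose_real, Matrix.transpose_nonsing_inv, Matrix.l2_opNorm_def]
  refine ContinuousLinearMap.opNorm_le_bound _ (by positivity) fun y => ?_
  change ‖WithLp.toLp 2 ((Vᵀ)⁻¹ *ᵥ y.ofLp)‖ ≤ _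
  rw [mul_assoc]
  refine hcoeff _ _ (by positivity) fun x hx => ?_
  refine (hc _ (totalDegree_polyOfCoeffs_le hdeg _) x hx).trans ?_
  gcongr
  refine Real.iSup_le (fun i => ?_) (norm_nonneg _)
  rw [eval_polyOfCoeffs_eq_vand, ← hVdef, Matrix.mulVec_mulVec, Matrix.mul_nonsing_inv _ hVt,
    Matrix.one_mulVec]
  exact PiLp.norm_apply_le y i

/-- Lemma `norming def`: on `Ω = [0,1]^d`, a set of `m = C(l+d,l)` points is
a norming set for `𝒫_l(Ω)` with some finite norming constant iff the Vandermonde matrix is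
invertible; moreover some `C₀ ≥ 1` depending only on `d, l` relates the minimal norming
constant `c_N` and the smallest singular value `c_S` via `C₀⁻¹ c_N ≤ c_S⁻¹ ≤ C₀ c_N`. -/
theorem stmt1 (d l : ℕ) (hd : 1 ≤ d)
    (kE : ℕ → Fin d → ℕ) (hkE : IsMultiIndexEnum d kE) :
    ∃ C₀ : ℝ, 1 ≤ C₀ ∧
      ∀ w : Fin ((l + d).choose l) → Fin d → ℝ, (∀ i, w i ∈ unitCube d) →
        ((∃ c : ℝ, IsNorming l (unitCube d) w c) ↔
          IsUnit (vand kE ((l + d).choose l) w).det) ∧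
        (IsUnit (vand kE ((l + d).choose l) w).det →
          C₀⁻¹ * sInf {c : ℝ | IsNorming l (unitCube d) w c} ≤
              (singMin (vand kE ((l + d).choose l) w))⁻¹ ∧
            (singMin (vand kE ((l + d).choose l) w))⁻¹ ≤
              C₀ * sInf {c : ℝ | IsNorming l (unitCube d) w c}) := by
  have hm : 0 < (l + d).choose l := Nat.choose_pos (Nat.le_add_right l d)
  have hdeg : ∀ i < (l + d).choose l, ∑ j, kE i j ≤ l := fun i => (hkE.degree_le_iff l i).2
  have hspan := fun (P : MvPolynomial (Fin d) ℝ) (hP : P.totalDegree ≤ l) =>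
    exists_eq_polyOfCoeffs hkE hP
  obtain ⟨K, hK, hcoeff⟩ := exists_norm_coeffs_le_of_eval_le hkE.1.1 ((l + d).choose l)
  have hm1 : (1 : ℝ) ≤ ((l + d).choose l : ℕ) := by exact_mod_cast hm
  refine ⟨max (((l + d).choose l : ℕ) : ℝ) K, le_max_of_le_left hm1, fun w _ =>
    ⟨⟨fun ⟨c, hc⟩ => hc.isUnit_det_vand hkE.1.1 hdeg,
      fun hV => ⟨_, isNorming_card_mul_norm_inv_vand hspan hV⟩⟩, fun hV => ?_⟩⟩
  have hC : (0 : ℝ) < max (((l + d).choose l : ℕ) : ℝ) K := lt_max_of_lt_right hK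
  have hmem := isNorming_card_mul_norm_inv_vand hspan hV
  rw [inv_singMin_eq_norm_inv hm hV]
  constructor
  · rw [inv_mul_le_iff₀ hC]
    refine (csInf_le ⟨1, fun c hc => hc.one_le hm⟩ hmem).trans ?_
    gcongr
    exact le_max_left _ _
  · rw [← div_le_iff₀' hC]
    refine le_csInf ⟨_, hmem⟩ fun c hc => ?_
    have hc0 : 0 ≤ c := zero_le_one.trans (hc.one_le hm)
    rw [div_le_iff₀' hC]
    refine (hc.norm_inv_vand_le hK.le hcoeff hdeg hc0 hV).trans ?_
    gcongr
    exact le_max_right _ _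
end
end

section
/- Let α > 0, d ≥ 1, ℓ = ⌊α⌋⁻, and let k ∈ ℕ^d be a multi-index with |k| = 2ℓ. Then K_α is 2ℓ-times continuously differentiable on ℝ^d, and there exist constants C > 0 and δ ∈ (0,1), depending only on α and d, such that for all h ∈ ℝ^d with 0 < ‖h‖₂ ≤ δ: |∂^k K_α(0) − ∂^k K_α(h)| ≤ C ‖h‖₂^{2(α−ℓ)} if α ∉ ℕ, and |∂^k K_α(0) − ∂^k K_α(h)| ≤ C ‖h‖₂² ln(1/‖h‖₂) if α ∈ ℕ. -/
open Matrix MeasureTheory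

noncomputable section

/-- The Matérn function with regularity `α` on ℝ^d (Fourier normalization):
`K_α(x) = ∫ cos⟨x,ξ⟩ (1+‖ξ‖₂²)^{-(α+d/2)} dξ`. -/
def matern (α : ℝ) (d : ℕ) (x : Fin d → ℝ) : ℝ :=
  ∫ ξ : Fin d → ℝ, Real.cos (∑ j, x j * ξ j) * (1 + ∑ j, ξ j ^ 2) ^ (-(α + (d : ℝ) / 2))

/-- `⌊α⌋⁻`, the largest integer strictly smaller than `α` (for `α > 0`). -/
def lbelow (α : ℝ) : ℕ := Nat.ceil α - 1

/-- `α` is a (nonnegative) integer. -/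
def IsNatVal (α : ℝ) : Prop := ∃ n : ℕ, α = n

/-- The Euclidean norm `‖x‖₂` on ℝ^d. -/
def nrm {d : ℕ} (x : Fin d → ℝ) : ℝ := Real.sqrt (∑ j, x j ^ 2)

/-- Partial derivative in the `j`-th coordinate. -/
def pder (d : ℕ) (j : Fin d) (f : (Fin d → ℝ) → ℝ) : (Fin d → ℝ) → ℝ :=
  fun x => fderiv ℝ f x (Pi.single j 1)

/-- The iterated partial derivative `∂^k` associated with a multi-index `k ∈ ℕ^d`. -/
def mder (d : ℕ) (k : Fin d → ℕ) (f : (Fin d → ℝ) → ℝ) : (Fin d → ℝ) → ℝ :=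
  (List.finRange d).foldr (fun j g => (pder d j)^[k j] g) f

/-- Mixed derivative `F^{(k₁,k₂)}(x₁,x₂) = ∂^{k₁}_{x₁} ∂^{k₂}_{x₂} F(x₁,x₂)`. -/
def mder2 (d : ℕ) (k₁ k₂ : Fin d → ℕ) (F : (Fin d → ℝ) → (Fin d → ℝ) → ℝ)
    (x₁ x₂ : Fin d → ℝ) : ℝ :=
  mder d k₁ (fun y => mder d k₂ (F y) x₂) x₁

/-- The Matérn kernel matrix `K_{A,A} = (K(w_i, w_j))_{i,j}`. -/
def maternMat (α : ℝ) (d : ℕ) {n : ℕ} (w : Fin n → Fin d → ℝ) :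
    Matrix (Fin n) (Fin n) ℝ :=
  Matrix.of fun i j => matern α d (w i - w j)

/-- The Matérn kernel column vector `K_{A,x} = (K(w_i, x))_i`. -/
def maternVec (α : ℝ) (d : ℕ) {n : ℕ} (w : Fin n → Fin d → ℝ) (x : Fin d → ℝ) :
    Fin n → ℝ :=
  fun i => matern α d (w i - x)

/-- The conditional kernel `K̃(x₁,x₂) = K(x₁,x₂) − K_{x₁,A} K_{A,A}⁻¹ K_{A,x₂}`. -/
def condK (α : ℝ) (d : ℕ) {n : ℕ} (w : Fin n → Fin d → ℝ) (x₁ x₂ : Fin d → ℝ) : ℝ :=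
  matern α d (x₁ - x₂) -
    maternVec α d w x₁ ⬝ᵥ ((maternMat α d w)⁻¹ *ᵥ maternVec α d w x₂)

/-- The oscillatory integral `x ↦ ∫ cos (⟨x, ξ⟩ + θ) f(ξ) dξ`. -/
def phaseIntegral {d : ℕ} (f : (Fin d → ℝ) → ℝ) (θ : ℝ) (x : Fin d → ℝ) : ℝ :=
  ∫ ξ : Fin d → ℝ, Real.cos (∑ j, x j * ξ j + θ) * f ξ

/-- All moments `‖ξ‖ ^ m f(ξ)` with `m ≤ n` are integrable. -/
def HasMoments {d : ℕ} (n : ℕ) (f : (Fin d → ℝ) → ℝ) : Prop :=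
  ∀ m ≤ n, Integrable fun ξ : Fin d → ℝ => ‖ξ‖ ^ m * f ξ

/-- The pairing `x ↦ ⟨x, ξ⟩` as a continuous linear functional of `x`. -/
def pairingCLM {d : ℕ} (ξ : Fin d → ℝ) : (Fin d → ℝ) →L[ℝ] ℝ :=
  ∑ j, ξ j • ContinuousLinearMap.proj (R := ℝ) (φ := fun _ : Fin d => ℝ) j

lemma pairingCLM_apply {d : ℕ} (ξ x : Fin d → ℝ) : pairingCLM ξ x = ∑ j, x j * ξ j := by
  simp [pairingCLM, mul_comm]

lemma continuous_pairingCLM {d : ℕ} : Continuous (pairingCLM (d := d)) := by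
  unfold pairingCLM
  fun_prop

lemma abs_sum_mul_le {d : ℕ} (x ξ : Fin d → ℝ) : |∑ j, x j * ξ j| ≤ d * ‖x‖ * ‖ξ‖ := by
  calc |∑ j, x j * ξ j| ≤ ∑ j, |x j * ξ j| := Finset.abs_sum_le_sum_abs _ _
    _ ≤ ∑ _j : Fin d, ‖x‖ * ‖ξ‖ := by
        refine Finset.sum_le_sum fun j _ => ?_
        rw [abs_mul]
        exact mul_le_mul (norm_le_pi_norm x j) (norm_le_pi_norm ξ j) (abs_nonneg _)
          (norm_nonneg _)
    _ = d * ‖x‖ * ‖ξ‖ := by simp [mul_assoc]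

lemma norm_pairingCLM_le {d : ℕ} (ξ : Fin d → ℝ) : ‖pairingCLM ξ‖ ≤ d * ‖ξ‖ := by
  refine ContinuousLinearMap.opNorm_le_bound _ (by positivity) fun x => ?_
  rw [pairingCLM_apply, Real.norm_eq_abs]
  exact (abs_sum_mul_le x ξ).trans_eq (by ring)

lemma HasMoments.mono {d m n : ℕ} {f : (Fin d → ℝ) → ℝ} (hf : HasMoments n f) (h : m ≤ n) :
    HasMoments m f := fun i hi => hf i (hi.trans h)

lemma HasMoments.integrable {d n : ℕ} {f : (Fin d → ℝ) → ℝ} (hf : HasMoments n f) :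
    Integrable f := by
  simpa using hf 0 (Nat.zero_le n)

lemma HasMoments.mul_linear {d n : ℕ} {f g : (Fin d → ℝ) → ℝ} (hf : HasMoments (n + 1) f)
    (hg : Continuous g) {C : ℝ} (hC : ∀ ξ, |g ξ| ≤ C * ‖ξ‖) :
    HasMoments n fun ξ => g ξ * f ξ := by
  intro m hm
  refine ((hf (m + 1) (by omega)).norm.const_mul C).mono' ?_ (.of_forall fun ξ => ?_)
  · have hmeas := hf.integrable.aestronglyMeasurable
    have hcont : Continuous fun ξ : Fin d → ℝ => ‖ξ‖ ^ m := by fun_prop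
    exact hcont.aestronglyMeasurable.mul (hg.aestronglyMeasurable.mul hmeas)
  · simp only [norm_mul, norm_pow, Real.norm_eq_abs, abs_norm]
    calc ‖ξ‖ ^ m * (|g ξ| * |f ξ|) ≤ ‖ξ‖ ^ m * (C * ‖ξ‖ * |f ξ|) := by gcongr; exact hC ξ
      _ = C * (‖ξ‖ ^ (m + 1) * |f ξ|) := by ring

lemma HasMoments.mul_pairing {d n : ℕ} {f : (Fin d → ℝ) → ℝ} (hf : HasMoments (n + 1) f)
    (y : Fin d → ℝ) : HasMoments n fun ξ => (∑ j, y j * ξ j) * f ξ :=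
  hf.mul_linear (by fun_prop) (abs_sum_mul_le y)

lemma HasMoments.mul_coord_pow {d n : ℕ} (j : Fin d) (m : ℕ) {f : (Fin d → ℝ) → ℝ}
    (hf : HasMoments (n + m) f) : HasMoments n fun ξ => ξ j ^ m * f ξ := by
  induction m generalizing f with
  | zero => simpa using hf
  | succ m ih =>
    have h1 : HasMoments (n + m) fun ξ => ξ j * f ξ :=
      HasMoments.mul_linear (C := 1) hf (continuous_apply j)
        (fun ξ => by simpa using norm_le_pi_norm ξ j)
    simpa [pow_succ, mul_assoc] using ih h1

lemma integrable_cos_mul {d : ℕ} {f : (Fin d → ℝ) → ℝ} (hf : Integrable f) (θ : ℝ)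
    (x : Fin d → ℝ) : Integrable fun ξ : Fin d → ℝ => Real.cos (∑ j, x j * ξ j + θ) * f ξ := by
  have hc : Continuous fun ξ : Fin d → ℝ => Real.cos (∑ j, x j * ξ j + θ) := by fun_prop
  exact hf.bdd_mul (c := 1) hc.aestronglyMeasurable
    (.of_forall fun ξ => by simpa using Real.abs_cos_le_one _)

lemma continuous_phaseIntegral {d : ℕ} {f : (Fin d → ℝ) → ℝ} (hf : Integrable f) (θ : ℝ) :
    Continuous (phaseIntegral f θ) := by
  refine continuous_of_dominated (bound := fun ξ => ‖f ξ‖)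
    (fun x => (integrable_cos_mul hf θ x).aestronglyMeasurable) (fun x => .of_forall fun ξ => ?_)
    hf.norm (.of_forall fun ξ => by fun_prop)
  rw [norm_mul]
  exact mul_le_of_le_one_left (norm_nonneg _) (Real.abs_cos_le_one _)

lemma hasFDerivAt_phaseIntegral {d : ℕ} {f : (Fin d → ℝ) → ℝ} (hf : HasMoments 1 f) (θ : ℝ)
    (x : Fin d → ℝ) :
    Integrable (fun ξ : Fin d → ℝ =>
      (Real.cos (∑ j, x j * ξ j + (θ + Real.pi / 2)) * f ξ) • pairingCLM ξ) ∧
    HasFDerivAt (phaseIntegral f θ)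
      (∫ ξ : Fin d → ℝ,
        (Real.cos (∑ j, x j * ξ j + (θ + Real.pi / 2)) * f ξ) • pairingCLM ξ) x := by
  have hbound : ∀ (y ξ : Fin d → ℝ),
      ‖(Real.cos (∑ j, y j * ξ j + (θ + Real.pi / 2)) * f ξ) • pairingCLM ξ‖ ≤
        d * ‖‖ξ‖ ^ 1 * f ξ‖ := by
    intro y ξ
    rw [norm_smul, norm_mul, norm_mul, pow_one, norm_norm]
    calc ‖Real.cos (∑ j, y j * ξ j + (θ + Real.pi / 2))‖ * ‖f ξ‖ * ‖pairingCLM ξ‖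
        ≤ 1 * ‖f ξ‖ * (d * ‖ξ‖) := by
          gcongr
          · exact Real.abs_cos_le_one _
          · exact norm_pairingCLM_le ξ
      _ = d * (‖ξ‖ * ‖f ξ‖) := by ring
  have hint : Integrable fun ξ : Fin d → ℝ => (d : ℝ) * ‖‖ξ‖ ^ 1 * f ξ‖ :=
    (hf 1 le_rfl).norm.const_mul _
  have hmeas : AEStronglyMeasurable (fun ξ : Fin d → ℝ =>
      (Real.cos (∑ j, x j * ξ j + (θ + Real.pi / 2)) * f ξ) • pairingCLM ξ) volume :=
    (integrable_cos_mul hf.integrable _ x).aestronglyMeasurable.smul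
      continuous_pairingCLM.aestronglyMeasurable
  refine ⟨hint.mono' hmeas (.of_forall (hbound x)), ?_⟩
  refine hasFDerivAt_integral_of_dominated_of_fderiv_le (s := Set.univ)
    (F' := fun (y ξ : Fin d → ℝ) =>
      (Real.cos (∑ j, y j * ξ j + (θ + Real.pi / 2)) * f ξ) • pairingCLM ξ) Filter.univ_mem
    (.of_forall fun y => (integrable_cos_mul hf.integrable θ y).aestronglyMeasurable)
    (integrable_cos_mul hf.integrable θ x) hmeas (.of_forall fun ξ y _ => hbound y ξ) hint
    (.of_forall fun ξ y _ => ?_)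
  have h1 : HasFDerivAt (fun y : Fin d → ℝ => ∑ j, y j * ξ j + θ) (pairingCLM ξ) y := by
    simpa only [pairingCLM_apply] using ((pairingCLM ξ).hasFDerivAt (x := y)).add_const θ
  convert! (h1.cos.mul_const (f ξ)) using 1
  rw [smul_smul, ← add_assoc, Real.cos_add_pi_div_two, mul_comm]

lemma fderiv_phaseIntegral_apply {d : ℕ} {f : (Fin d → ℝ) → ℝ} (hf : HasMoments 1 f) (θ : ℝ)
    (x y : Fin d → ℝ) :
    fderiv ℝ (phaseIntegral f θ) x y =
      phaseIntegral (fun ξ => (∑ j, y j * ξ j) * f ξ) (θ + Real.pi / 2) x := by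
  obtain ⟨hi, hd⟩ := hasFDerivAt_phaseIntegral hf θ x
  rw [hd.fderiv, ContinuousLinearMap.integral_apply hi]
  refine integral_congr_ae (.of_forall fun ξ => ?_)
  simp only [_root_.smul_apply, pairingCLM_apply, smul_eq_mul]
  ring

lemma contDiff_phaseIntegral {d n : ℕ} {f : (Fin d → ℝ) → ℝ} (hf : HasMoments n f) (θ : ℝ) :
    ContDiff ℝ n (phaseIntegral f θ) := by
  induction n generalizing f θ with
  | zero => simpa using continuous_phaseIntegral hf.integrable θ
  | succ n ih =>
    have hf1 : HasMoments 1 f := hf.mono (by omega)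
    push_cast
    refine contDiff_succ_iff_fderiv_apply.2
      ⟨fun x => (hasFDerivAt_phaseIntegral hf1 θ x).2.differentiableAt, by simp, fun y => ?_⟩
    simp only [fderiv_phaseIntegral_apply hf1]
    exact ih (hf.mul_pairing y) _

lemma pder_phaseIntegral {d : ℕ} {f : (Fin d → ℝ) → ℝ} (hf : HasMoments 1 f) (θ : ℝ)
    (j : Fin d) :
    pder d j (phaseIntegral f θ) = phaseIntegral (fun ξ => ξ j * f ξ) (θ + Real.pi / 2) := by
  funext x
  rw [pder, fderiv_phaseIntegral_apply hf]
  simp [Pi.single_apply]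

lemma pder_iterate_phaseIntegral {d : ℕ} (j : Fin d) (m : ℕ) {f : (Fin d → ℝ) → ℝ}
    (hf : HasMoments m f) (θ : ℝ) :
    (pder d j)^[m] (phaseIntegral f θ) =
      phaseIntegral (fun ξ => ξ j ^ m * f ξ) (θ + m * (Real.pi / 2)) := by
  induction m with
  | zero => simp
  | succ m ih =>
    have h1 : HasMoments 1 fun ξ => ξ j ^ m * f ξ :=
      HasMoments.mul_coord_pow j m (hf.mono (by omega))
    rw [Function.iterate_succ_apply', ih (hf.mono (by omega)), pder_phaseIntegral h1]
    congr 1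
    · funext ξ; ring
    · push_cast; ring

lemma foldr_pder_phaseIntegral {d : ℕ} (k : Fin d → ℕ) (l : List (Fin d)) (n : ℕ)
    {f : (Fin d → ℝ) → ℝ} (hf : HasMoments (n + (l.map k).sum) f) (θ : ℝ) :
    l.foldr (fun j g => (pder d j)^[k j] g) (phaseIntegral f θ) =
      phaseIntegral (fun ξ => (l.map fun j => ξ j ^ k j).prod * f ξ)
        (θ + (l.map k).sum * (Real.pi / 2)) ∧
    HasMoments n fun ξ => (l.map fun j => ξ j ^ k j).prod * f ξ := by
  induction l generalizing n with
  | nil => simpa using hf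
  | cons j l ih =>
    have hf' : HasMoments (n + k j + (l.map k).sum) f := by
      simpa [add_assoc] using hf
    obtain ⟨h1, h2⟩ := ih (n + k j) hf'
    constructor
    · rw [List.foldr_cons, h1, pder_iterate_phaseIntegral j (k j) (h2.mono (by omega))]
      congr 1
      · funext ξ; simp [mul_assoc]
      · simp only [List.map_cons, List.sum_cons]; push_cast; ring
    · simpa [mul_assoc] using h2.mul_coord_pow j (k j)

lemma mder_phaseIntegral {d : ℕ} (k : Fin d → ℕ) {f : (Fin d → ℝ) → ℝ}
    (hf : HasMoments (∑ j, k j) f) (θ : ℝ) :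
    mder d k (phaseIntegral f θ) =
      phaseIntegral (fun ξ => (∏ j, ξ j ^ k j) * f ξ) (θ + (∑ j, k j : ℕ) * (Real.pi / 2)) ∧
    Integrable fun ξ => (∏ j, ξ j ^ k j) * f ξ := by
  have hs : ((List.finRange d).map k).sum = ∑ j, k j := by
    rw [← List.ofFn_eq_map, List.sum_ofFn]
  have hp : ∀ ξ : Fin d → ℝ, ((List.finRange d).map fun j => ξ j ^ k j).prod =
      ∏ j, ξ j ^ k j := fun ξ => by rw [← List.ofFn_eq_map, List.prod_ofFn]
  have h := foldr_pder_phaseIntegral k (List.finRange d) 0 (by simpa [hs] using hf) θ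
  simp only [hs, hp] at h
  exact ⟨h.1, h.2.integrable⟩

lemma setIntegral_Ioi_le_of_le_rpow {G : ℝ → ℝ} {β r B : ℝ} (hβ : 0 < β) (hr : 0 < r)
    {g : ℝ → ℝ} (hGm : Continuous G) (hG0 : ∀ y, 0 < y → 0 ≤ G y)
    (hg : IntegrableOn g (Set.Ioc 0 (1 / r)))
    (hGg : ∀ y ∈ Set.Ioc 0 (1 / r), G y ≤ g y) (hB : ∫ y in Set.Ioc 0 (1 / r), g y ≤ B)
    (hGtail : ∀ y, 1 / r < y → G y ≤ y ^ (-2 * β - 1)) :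
    IntegrableOn G (Set.Ioi 0) ∧ ∫ y in Set.Ioi 0, G y ≤ B + r ^ (2 * β) / (2 * β) := by
  have hr' : 0 < 1 / r := by positivity
  have htail : IntegrableOn (fun y : ℝ => y ^ (-2 * β - 1)) (Set.Ioi (1 / r)) :=
    integrableOn_Ioi_rpow_of_lt (by linarith) hr'
  have hG1 : IntegrableOn G (Set.Ioc 0 (1 / r)) := by
    refine hg.mono' hGm.aestronglyMeasurable ?_
    refine (ae_restrict_iff' measurableSet_Ioc).2 (.of_forall fun y hy => ?_)
    rw [Real.norm_eq_abs, abs_of_nonneg (hG0 y hy.1)]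
    exact hGg y hy
  have hG2 : IntegrableOn G (Set.Ioi (1 / r)) := by
    refine htail.mono' hGm.aestronglyMeasurable ?_
    refine (ae_restrict_iff' measurableSet_Ioi).2 (.of_forall fun y hy => ?_)
    rw [Real.norm_eq_abs, abs_of_nonneg (hG0 y (hr'.trans hy))]
    exact hGtail y hy
  rw [← Set.Ioc_union_Ioi_eq_Ioi hr'.le]
  refine ⟨hG1.union hG2, ?_⟩
  rw [setIntegral_union (Set.Ioc_disjoint_Ioi le_rfl) measurableSet_Ioi hG1 hG2]
  refine add_le_add ((setIntegral_mono_on hG1 hg measurableSet_Ioc hGg).trans hB) ?_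
  refine (setIntegral_mono_on hG2 htail measurableSet_Ioi fun y hy => hGtail y hy).trans_eq ?_
  rw [integral_Ioi_rpow_of_lt (by linarith) hr', one_div, Real.inv_rpow hr.le,
    ← Real.rpow_neg hr.le]
  rw [show -(-2 * β - 1 + 1) = 2 * β by ring, show -2 * β - 1 + 1 = -(2 * β) by ring,
    neg_div_neg_eq]

/-- The radial profile, in polar coordinates, of the majorant of the increments of `∂^k K_α`. -/
def radialProfile (d : ℕ) (β r y : ℝ) : ℝ :=
  y ^ (d - 1) * (min 1 (r ^ 2 * y ^ 2) * (1 + y ^ 2) ^ (-(β + (d : ℝ) / 2)))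

lemma continuous_radialProfile (d : ℕ) (β r : ℝ) : Continuous (radialProfile d β r) := by
  have h : Continuous fun y : ℝ => (1 + y ^ 2) ^ (-(β + (d : ℝ) / 2)) :=
    Continuous.rpow_const (by fun_prop) fun y => Or.inl (by positivity)
  unfold radialProfile
  fun_prop

lemma radialProfile_nonneg (d : ℕ) (β r : ℝ) {y : ℝ} (hy : 0 < y) :
    0 ≤ radialProfile d β r y := by
  unfold radialProfile
  have : 0 ≤ min 1 (r ^ 2 * y ^ 2) := le_min zero_le_one (by positivity)
  positivity

lemma radial_weight_le {d : ℕ} (hd : 1 ≤ d) {β y : ℝ} (hβ : 0 < β) (hy : 0 < y) :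
    y ^ (d - 1) * (1 + y ^ 2) ^ (-(β + (d : ℝ) / 2)) ≤ y ^ (-2 * β - 1) := by
  calc y ^ (d - 1) * (1 + y ^ 2) ^ (-(β + (d : ℝ) / 2))
      ≤ y ^ (d - 1) * (y ^ 2) ^ (-(β + (d : ℝ) / 2)) := by
        gcongr ?_ * ?_
        refine Real.rpow_le_rpow_of_nonpos (by positivity) (by linarith) ?_
        have : (0 : ℝ) ≤ d := Nat.cast_nonneg d
        linarith
    _ = y ^ (-2 * β - 1) := by
        rw [← Real.rpow_natCast, ← Real.rpow_natCast, ← Real.rpow_mul hy.le, ← Real.rpow_add hy]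
        congr 1
        push_cast [hd]
        ring

lemma radialProfile_le_tail {d : ℕ} (hd : 1 ≤ d) {β : ℝ} (r : ℝ) {y : ℝ} (hβ : 0 < β)
    (hy : 0 < y) : radialProfile d β r y ≤ y ^ (-2 * β - 1) := by
  refine le_trans ?_ (radial_weight_le hd hβ hy)
  unfold radialProfile
  gcongr
  exact mul_le_of_le_one_left (by positivity) (min_le_left _ _)

lemma radialProfile_le_core {d : ℕ} (hd : 1 ≤ d) {β : ℝ} (r : ℝ) {y : ℝ} (hβ : 0 < β)
    (hy : 0 < y) : radialProfile d β r y ≤ r ^ 2 * y ^ (1 - 2 * β) := by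
  calc radialProfile d β r y
      ≤ y ^ (d - 1) * (r ^ 2 * y ^ 2 * (1 + y ^ 2) ^ (-(β + (d : ℝ) / 2))) := by
        unfold radialProfile
        gcongr
        exact min_le_right _ _
    _ = r ^ 2 * y ^ 2 * (y ^ (d - 1) * (1 + y ^ 2) ^ (-(β + (d : ℝ) / 2))) := by ring
    _ ≤ r ^ 2 * y ^ 2 * y ^ (-2 * β - 1) := by
        gcongr
        exact radial_weight_le hd hβ hy
    _ = r ^ 2 * y ^ (1 - 2 * β) := by
        rw [mul_assoc, ← Real.rpow_natCast y 2, ← Real.rpow_add hy]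
        congr 2
        push_cast
        ring

lemma radialProfile_le_of_le_one {d : ℕ} {β : ℝ} (r : ℝ) {y : ℝ} (hβ : 0 < β)
    (hy : 0 < y) (hy1 : y ≤ 1) : radialProfile d β r y ≤ r ^ 2 := by
  have h1 : y ^ (d - 1) ≤ 1 := pow_le_one₀ hy.le hy1
  have h2 : (1 + y ^ 2) ^ (-(β + (d : ℝ) / 2)) ≤ 1 :=
    Real.rpow_le_one_of_one_le_of_nonpos (by nlinarith) (by
      have : (0 : ℝ) ≤ d := Nat.cast_nonneg d
      linarith)
  have h3 : min 1 (r ^ 2 * y ^ 2) ≤ r ^ 2 :=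
    (min_le_right _ _).trans (mul_le_of_le_one_right (by positivity) (pow_le_one₀ hy.le hy1))
  have h4 : 0 ≤ min 1 (r ^ 2 * y ^ 2) := le_min zero_le_one (by positivity)
  calc radialProfile d β r y ≤ 1 * (r ^ 2 * 1) := by unfold radialProfile; gcongr
    _ = r ^ 2 := by ring

lemma integral_radialProfile_le_rpow {d : ℕ} (hd : 1 ≤ d) {β r : ℝ} (hβ : 0 < β) (hβ1 : β < 1)
    (hr : 0 < r) :
    IntegrableOn (radialProfile d β r) (Set.Ioi 0) ∧
      ∫ y in Set.Ioi 0, radialProfile d β r y ≤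
        (1 / (2 - 2 * β) + 1 / (2 * β)) * r ^ (2 * β) := by
  have hr' : 0 < 1 / r := by positivity
  have hi : IntervalIntegrable (fun y : ℝ => y ^ (1 - 2 * β)) volume 0 (1 / r) :=
    intervalIntegral.intervalIntegrable_rpow' (by linarith)
  have hg : IntegrableOn (fun y : ℝ => r ^ 2 * y ^ (1 - 2 * β)) (Set.Ioc 0 (1 / r)) :=
    ((intervalIntegrable_iff_integrableOn_Ioc_of_le hr'.le).1 hi).const_mul _
  have hval : ∫ y in Set.Ioc 0 (1 / r), r ^ 2 * y ^ (1 - 2 * β) =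
      r ^ (2 * β) / (2 - 2 * β) := by
    rw [integral_const_mul, ← intervalIntegral.integral_of_le hr'.le,
      integral_rpow (Or.inl (by linarith)), Real.zero_rpow (by linarith), sub_zero, one_div,
      Real.inv_rpow hr.le, ← Real.rpow_neg hr.le, ← mul_div_assoc, ← Real.rpow_natCast r 2,
      ← Real.rpow_add hr]
    rw [show ((2 : ℕ) : ℝ) + -(1 - 2 * β + 1) = 2 * β by push_cast; ring,
      show 1 - 2 * β + 1 = 2 - 2 * β by ring]
  obtain ⟨h1, h2⟩ := setIntegral_Ioi_le_of_le_rpow hβ hr (continuous_radialProfile d β r)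
    (fun y hy => radialProfile_nonneg d β r hy) hg
    (fun y hy => radialProfile_le_core hd r hβ hy.1) hval.le
    (fun y hy => radialProfile_le_tail hd r hβ (hr'.trans hy))
  exact ⟨h1, h2.trans_eq (by ring)⟩

lemma integral_radialProfile_one_le_log {d : ℕ} (hd : 1 ≤ d) {r : ℝ} (hr : 0 < r)
    (hr3 : r ≤ 1 / 3) :
    IntegrableOn (radialProfile d 1 r) (Set.Ioi 0) ∧
      ∫ y in Set.Ioi 0, radialProfile d 1 r y ≤ 5 / 2 * (r ^ 2 * Real.log (1 / r)) := by
  have hr' : 3 ≤ 1 / r := by rw [le_div_iff₀ hr]; linarith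
  have hlog : 1 ≤ Real.log (1 / r) := by
    rw [Real.le_log_iff_exp_le (by positivity)]
    exact Real.exp_one_lt_three.le.trans hr'
  have hcont : ContinuousOn (fun y : ℝ => r ^ 2 * y⁻¹) (Set.Icc 1 (1 / r)) :=
    continuousOn_const.mul (continuousOn_inv₀.mono fun y hy => by
      simpa using (zero_lt_one.trans_le hy.1).ne')
  have hg : IntegrableOn (fun y : ℝ => r ^ 2 * min 1 y⁻¹) (Set.Ioc 0 (1 / r)) := by
    refine Integrable.mono' (g := fun _ => r ^ 2) (integrableOn_const (by simp)) ?_ ?_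
    · exact Measurable.aestronglyMeasurable (by fun_prop)
    · refine (ae_restrict_iff' measurableSet_Ioc).2 (.of_forall fun y hy => ?_)
      have : 0 ≤ min 1 y⁻¹ := le_min zero_le_one (inv_nonneg.2 hy.1.le)
      rw [Real.norm_eq_abs, abs_of_nonneg (by positivity)]
      exact mul_le_of_le_one_right (by positivity) (min_le_left _ _)
  have hval : ∫ y in Set.Ioc 0 (1 / r), r ^ 2 * min 1 y⁻¹ ≤ r ^ 2 * (1 + Real.log (1 / r)) := by
    rw [← Set.Ioc_union_Ioc_eq_Ioc zero_le_one (by linarith : (1 : ℝ) ≤ 1 / r)] at hg ⊢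
    rw [setIntegral_union (Set.Ioc_disjoint_Ioc_of_le le_rfl) measurableSet_Ioc
      (hg.mono_set Set.subset_union_left) (hg.mono_set Set.subset_union_right), mul_add]
    refine add_le_add ?_ ?_
    · refine (setIntegral_mono_on (hg.mono_set Set.subset_union_left)
        (integrableOn_const (C := r ^ 2 * 1) (by simp)) measurableSet_Ioc fun y _ => ?_).trans_eq ?_
      · gcongr
        exact min_le_left _ _
      · simp
    · refine (setIntegral_mono_on (hg.mono_set Set.subset_union_right)
        (hcont.integrableOn_Icc.mono_set Set.Ioc_subset_Icc_self) measurableSet_Ioc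
        fun y _ => ?_).trans_eq ?_
      · gcongr
        exact min_le_right _ _
      · rw [integral_const_mul, ← intervalIntegral.integral_of_le (by linarith),
          integral_inv_of_pos one_pos (by linarith), div_one]
  have hcore : ∀ y ∈ Set.Ioc 0 (1 / r), radialProfile d 1 r y ≤ r ^ 2 * min 1 y⁻¹ := by
    intro y hy
    rcases le_total y 1 with h | h
    · rw [min_eq_left ((one_le_inv₀ hy.1).2 h), mul_one]
      exact radialProfile_le_of_le_one r one_pos hy.1 h
    · rw [min_eq_right (inv_le_one_of_one_le₀ h)]
      refine (radialProfile_le_core hd r one_pos hy.1).trans_eq ?_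
      rw [show (1 : ℝ) - 2 * 1 = -1 by norm_num, Real.rpow_neg_one]
  obtain ⟨h1, h2⟩ := setIntegral_Ioi_le_of_le_rpow one_pos hr (continuous_radialProfile d 1 r)
    (fun y hy => radialProfile_nonneg d 1 r hy) hg hcore hval
    (fun y hy => radialProfile_le_tail hd r one_pos (by linarith))
  refine ⟨h1, h2.trans ?_⟩
  rw [mul_one, Real.rpow_two]
  nlinarith [sq_nonneg r]

/-- The spectral density `(1 + ‖ξ‖₂²) ^ (-(α + d/2))` of the Matérn kernel. -/
def maternWeight (α : ℝ) (d : ℕ) (ξ : Fin d → ℝ) : ℝ :=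
  (1 + ∑ j, ξ j ^ 2) ^ (-(α + (d : ℝ) / 2))

lemma matern_eq_phaseIntegral (α : ℝ) (d : ℕ) :
    matern α d = phaseIntegral (maternWeight α d) 0 := by
  funext x
  simp [matern, phaseIntegral, maternWeight]

lemma continuous_maternWeight (α : ℝ) (d : ℕ) : Continuous (maternWeight α d) :=
  Continuous.rpow_const (by fun_prop) fun ξ => Or.inl (by positivity)

lemma maternWeight_nonneg (α : ℝ) (d : ℕ) (ξ : Fin d → ℝ) : 0 ≤ maternWeight α d ξ := by
  unfold maternWeight
  positivity

lemma norm_sq_le_sum_sq {d : ℕ} (ξ : Fin d → ℝ) : ‖ξ‖ ^ 2 ≤ ∑ j, ξ j ^ 2 := by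
  refine (Real.le_sqrt (norm_nonneg _) (by positivity)).1 ?_
  refine (pi_norm_le_iff_of_nonneg (Real.sqrt_nonneg _)).2 fun j => ?_
  exact Real.abs_le_sqrt (Finset.single_le_sum (f := fun j => ξ j ^ 2)
    (fun i _ => sq_nonneg _) (Finset.mem_univ j))

lemma sum_sq_le_norm_sq {d : ℕ} (ξ : Fin d → ℝ) : ∑ j, ξ j ^ 2 ≤ d * ‖ξ‖ ^ 2 := by
  calc ∑ j, ξ j ^ 2 ≤ ∑ _j : Fin d, ‖ξ‖ ^ 2 := by
        refine Finset.sum_le_sum fun j _ => ?_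
        rw [← sq_abs]
        exact pow_le_pow_left₀ (abs_nonneg _) (norm_le_pi_norm ξ j) 2
    _ = d * ‖ξ‖ ^ 2 := by simp

lemma norm_pow_mul_maternWeight_le {α : ℝ} (hα : 0 < α) {d m l : ℕ} (hm : m ≤ 2 * l)
    (ξ : Fin d → ℝ) :
    ‖ξ‖ ^ m * maternWeight α d ξ ≤ (1 + ‖ξ‖ ^ 2) ^ (-(α - l + (d : ℝ) / 2)) := by
  have hs : (0 : ℝ) < 1 + ‖ξ‖ ^ 2 := by positivity
  have h1 : ‖ξ‖ ^ m ≤ (1 + ‖ξ‖ ^ 2) ^ l := by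
    rw [← pow_le_pow_iff_left₀ (by positivity) (by positivity) two_ne_zero, ← pow_mul,
      ← pow_mul, mul_comm m 2, pow_mul, mul_comm l 2]
    calc (‖ξ‖ ^ 2) ^ m ≤ (1 + ‖ξ‖ ^ 2) ^ m := by gcongr; linarith
      _ ≤ (1 + ‖ξ‖ ^ 2) ^ (2 * l) := pow_le_pow_right₀ (by nlinarith [norm_nonneg ξ]) hm
  have h2 : maternWeight α d ξ ≤ (1 + ‖ξ‖ ^ 2) ^ (-(α + (d : ℝ) / 2)) := by
    refine Real.rpow_le_rpow_of_nonpos hs (by linarith [norm_sq_le_sum_sq ξ]) ?_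
    have : (0 : ℝ) ≤ d := Nat.cast_nonneg d
    linarith
  calc ‖ξ‖ ^ m * maternWeight α d ξ
      ≤ (1 + ‖ξ‖ ^ 2) ^ l * (1 + ‖ξ‖ ^ 2) ^ (-(α + (d : ℝ) / 2)) :=
        mul_le_mul h1 h2 (maternWeight_nonneg α d ξ) (by positivity)
    _ = (1 + ‖ξ‖ ^ 2) ^ (-(α - l + (d : ℝ) / 2)) := by
        rw [← Real.rpow_natCast, ← Real.rpow_add hs]
        congr 1
        ring

lemma hasMoments_maternWeight {α : ℝ} (hα : 0 < α) (d : ℕ) {l : ℕ} (hl : (l : ℝ) < α) :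
    HasMoments (2 * l) (maternWeight α d) := by
  intro m hm
  have hint : Integrable fun ξ : Fin d → ℝ =>
      (1 + ‖ξ‖ ^ 2) ^ (-(2 * (α - l) + (d : ℝ)) / 2) :=
    integrable_rpow_neg_one_add_norm_sq (by simp; linarith)
  refine hint.mono' ?_ (.of_forall fun ξ => ?_)
  · exact ((continuous_norm.pow m).mul (continuous_maternWeight α d)).aestronglyMeasurable
  · rw [Real.norm_eq_abs,
      abs_of_nonneg (mul_nonneg (by positivity) (maternWeight_nonneg α d ξ))]
    refine (norm_pow_mul_maternWeight_le hα hm ξ).trans_eq ?_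
    congr 1
    ring

lemma abs_prod_pow_le {d : ℕ} (k : Fin d → ℕ) (ξ : Fin d → ℝ) :
    |∏ j, ξ j ^ k j| ≤ ‖ξ‖ ^ ∑ j, k j := by
  rw [Finset.abs_prod, ← Finset.prod_pow_eq_pow_sum]
  refine Finset.prod_le_prod (fun j _ => abs_nonneg _) fun j _ => ?_
  rw [abs_pow]
  exact pow_le_pow_left₀ (abs_nonneg _) (norm_le_pi_norm ξ j) _

lemma one_sub_cos_pairing_le {d : ℕ} (hd : 1 ≤ d) (h ξ : Fin d → ℝ) :
    1 - Real.cos (∑ j, h j * ξ j) ≤ 2 * d * min 1 (nrm h ^ 2 * ‖ξ‖ ^ 2) := by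
  have hd' : (1 : ℝ) ≤ d := by exact_mod_cast hd
  have hn : nrm h ^ 2 = ∑ j, h j ^ 2 := Real.sq_sqrt (by positivity)
  have hcs : (∑ j, h j * ξ j) ^ 2 ≤ d * (nrm h ^ 2 * ‖ξ‖ ^ 2) := by
    calc (∑ j, h j * ξ j) ^ 2 ≤ (∑ j, h j ^ 2) * ∑ j, ξ j ^ 2 :=
          Finset.sum_mul_sq_le_sq_mul_sq _ _ _
      _ ≤ (∑ j, h j ^ 2) * (d * ‖ξ‖ ^ 2) := by gcongr; exact sum_sq_le_norm_sq ξ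
      _ = d * (nrm h ^ 2 * ‖ξ‖ ^ 2) := by rw [hn]; ring
  have hc := Real.one_sub_sq_div_two_le_cos (x := ∑ j, h j * ξ j)
  have hc' := Real.neg_one_le_cos (∑ j, h j * ξ j)
  rcases min_choice 1 (nrm h ^ 2 * ‖ξ‖ ^ 2) with hmin | hmin <;> rw [hmin]
  · linarith
  · have : 0 ≤ d * (nrm h ^ 2 * ‖ξ‖ ^ 2) := by positivity
    linarith

lemma abs_mder_matern_sub_le {α : ℝ} (hα : 0 < α) {d : ℕ} (hd : 1 ≤ d) {l : ℕ}
    (hl : (l : ℝ) < α) (k : Fin d → ℕ) (hk : ∑ j, k j = 2 * l) (h : Fin d → ℝ)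
    (hint : IntegrableOn (radialProfile d (α - l) (nrm h)) (Set.Ioi 0)) :
    |mder d k (matern α d) 0 - mder d k (matern α d) h| ≤
      2 * d * (d * (volume : Measure (Fin d → ℝ)).real (Metric.ball 0 1)) *
        ∫ y in Set.Ioi 0, radialProfile d (α - l) (nrm h) y := by
  have : Nonempty (Fin d) := ⟨⟨0, hd⟩⟩
  have hmom : HasMoments (∑ j, k j) (maternWeight α d) :=
    hk ▸ hasMoments_maternWeight hα d hl
  obtain ⟨hder, hki⟩ := mder_phaseIntegral k hmom 0
  set φ : ℝ → ℝ := fun y =>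
    min 1 (nrm h ^ 2 * y ^ 2) * (1 + y ^ 2) ^ (-(α - l + (d : ℝ) / 2)) with hφ
  have hφi : Integrable fun ξ : Fin d → ℝ => φ ‖ξ‖ := by
    rw [integrable_fun_norm_addHaar (μ := volume) (f := φ)]
    rw [Module.finrank_fin_fun]
    exact hint
  have hφint : ∫ ξ : Fin d → ℝ, φ ‖ξ‖ =
      d * (volume : Measure (Fin d → ℝ)).real (Metric.ball 0 1) *
        ∫ y in Set.Ioi 0, radialProfile d (α - l) (nrm h) y := by
    rw [integral_fun_norm_addHaar (μ := volume) (f := φ)]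
    simp [hφ, radialProfile, mul_assoc]
  have hcos : ∀ t : ℝ, Real.cos (t + (0 + (∑ j, k j : ℕ) * (Real.pi / 2))) =
      (-1) ^ l * Real.cos t := by
    intro t
    rw [hk, ← Real.cos_add_nat_mul_pi]
    congr 1
    push_cast
    ring
  rw [matern_eq_phaseIntegral, hder]
  unfold phaseIntegral
  rw [← integral_sub (integrable_cos_mul hki _ _) (integrable_cos_mul hki _ _), mul_assoc,
    ← hφint, ← integral_const_mul, ← Real.norm_eq_abs]
  refine norm_integral_le_of_norm_le (hφi.const_mul _) (.of_forall fun ξ => ?_)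
  rw [hcos, hcos, ← sub_mul, ← mul_sub, norm_mul, norm_mul, norm_pow, norm_neg, norm_one,
    one_pow, one_mul]
  have h0 : Real.cos (∑ j, (0 : Fin d → ℝ) j * ξ j) = 1 := by simp
  rw [h0, Real.norm_eq_abs, abs_of_nonneg (sub_nonneg.2 (Real.cos_le_one _)), Real.norm_eq_abs,
    abs_mul, abs_of_nonneg (maternWeight_nonneg α d ξ)]
  have hmin : 0 ≤ min 1 (nrm h ^ 2 * ‖ξ‖ ^ 2) := le_min zero_le_one (by positivity)
  calc (1 - Real.cos (∑ j, h j * ξ j)) * (|∏ j, ξ j ^ k j| * maternWeight α d ξ)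
      ≤ (2 * d * min 1 (nrm h ^ 2 * ‖ξ‖ ^ 2)) *
          (1 + ‖ξ‖ ^ 2) ^ (-(α - l + (d : ℝ) / 2)) := by
        refine mul_le_mul (one_sub_cos_pairing_le hd h ξ) ?_
          (mul_nonneg (abs_nonneg _) (maternWeight_nonneg α d ξ)) (by positivity)
        refine le_trans ?_ (norm_pow_mul_maternWeight_le hα le_rfl ξ)
        rw [← hk]
        exact mul_le_mul_of_nonneg_right (abs_prod_pow_le k ξ) (maternWeight_nonneg α d ξ)
    _ = 2 * d * φ ‖ξ‖ := by simp only [hφ]; ring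

lemma lbelow_lt_and_le {α : ℝ} (hα : 0 < α) : (lbelow α : ℝ) < α ∧ α ≤ lbelow α + 1 := by
  have h1 : 1 ≤ ⌈α⌉₊ := Nat.ceil_pos.2 hα
  have h2 : ((lbelow α : ℕ) : ℝ) = ⌈α⌉₊ - 1 := by simp [lbelow, h1]
  rw [h2]
  exact ⟨by linarith [Nat.ceil_lt_add_one hα.le], by linarith [Nat.le_ceil α]⟩

lemma isNatVal_iff_sub_lbelow {α : ℝ} (hα : 0 < α) : IsNatVal α ↔ α - lbelow α = 1 := by
  constructor
  · rintro ⟨n, rfl⟩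
    have hn : 1 ≤ n := by exact_mod_cast hα
    simp [lbelow, hn]
  · intro h
    exact ⟨lbelow α + 1, by push_cast; linarith⟩

/-- Lemma `matern smooth`, Lipschitz part: for a multi-index `k` with
`|k| = 2⌊α⌋⁻`, near `0` the derivative `∂^k K_α` satisfies
`|∂^k K_α(0) − ∂^k K_α(h)| ≲ ‖h‖₂^{2(α−⌊α⌋⁻)}` when `α ∉ ℕ` and
`≲ ‖h‖₂² ln(1/‖h‖₂)` when `α ∈ ℕ`. -/
theorem stmt7 (α : ℝ) (hα : 0 < α) (d : ℕ) (hd : 1 ≤ d)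
    (k : Fin d → ℕ) (hk : (∑ j, k j) = 2 * lbelow α) :
    ContDiff ℝ ((2 * lbelow α : ℕ) : ℕ∞) (matern α d) ∧
    ∃ C : ℝ, 0 < C ∧ ∃ δ : ℝ, 0 < δ ∧ δ < 1 ∧
      ∀ h : Fin d → ℝ, 0 < nrm h → nrm h ≤ δ →
        (¬ IsNatVal α →
          |mder d k (matern α d) 0 - mder d k (matern α d) h| ≤
            C * nrm h ^ (2 * (α - (lbelow α : ℝ)))) ∧
        (IsNatVal α →
          |mder d k (matern α d) 0 - mder d k (matern α d) h| ≤
            C * (nrm h ^ (2 : ℕ) * Real.log (1 / nrm h))) := by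
  obtain ⟨hl, hl1⟩ := lbelow_lt_and_le hα
  set V : ℝ := 2 * d * (d * (volume : Measure (Fin d → ℝ)).real (Metric.ball 0 1))
  have hV0 : 0 ≤ V := by positivity
  refine ⟨?_, ?_⟩
  · rw [matern_eq_phaseIntegral]
    exact contDiff_phaseIntegral (hasMoments_maternWeight hα d hl) 0
  set β : ℝ := α - lbelow α with hβdef
  have hβ : 0 < β := sub_pos.2 hl
  by_cases hnat : IsNatVal α
  · have hβ1 : β = 1 := (isNatVal_iff_sub_lbelow hα).1 hnat
    refine ⟨(V + 1) * (5 / 2), by positivity, 1 / 3, by norm_num, by norm_num,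
      fun h h0 hδ => ⟨fun hn => absurd hnat hn, fun _ => ?_⟩⟩
    obtain ⟨hi, hle⟩ := integral_radialProfile_one_le_log hd h0 hδ
    have habs := abs_mder_matern_sub_le hα hd hl k hk h
    rw [← hβdef, hβ1] at habs
    have hlog : 0 ≤ Real.log (1 / nrm h) :=
      Real.log_nonneg (by rw [le_div_iff₀ h0]; linarith)
    calc |mder d k (matern α d) 0 - mder d k (matern α d) h|
        ≤ V * ∫ y in Set.Ioi 0, radialProfile d 1 (nrm h) y := habs hi
      _ ≤ (V + 1) * (5 / 2 * (nrm h ^ 2 * Real.log (1 / nrm h))) :=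
          (mul_le_mul_of_nonneg_left hle hV0).trans
            (mul_le_mul_of_nonneg_right (by linarith) (by positivity))
      _ = (V + 1) * (5 / 2) * (nrm h ^ 2 * Real.log (1 / nrm h)) := by ring
  · have hβ1 : β < 1 := lt_of_le_of_ne (by linarith)
      fun h => hnat ((isNatVal_iff_sub_lbelow hα).2 h)
    have hc : 0 < 1 / (2 - 2 * β) + 1 / (2 * β) :=
      add_pos (one_div_pos.2 (by linarith)) (one_div_pos.2 (by linarith))
    refine ⟨(V + 1) * (1 / (2 - 2 * β) + 1 / (2 * β)), by positivity, 1 / 3, by norm_num,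
      by norm_num, fun h h0 _ => ⟨fun _ => ?_, fun hn => absurd hn hnat⟩⟩
    obtain ⟨hi, hle⟩ := integral_radialProfile_le_rpow hd hβ hβ1 h0
    calc |mder d k (matern α d) 0 - mder d k (matern α d) h|
        ≤ V * ∫ y in Set.Ioi 0, radialProfile d β (nrm h) y :=
          abs_mder_matern_sub_le hα hd hl k hk h hi
      _ ≤ (V + 1) * ((1 / (2 - 2 * β) + 1 / (2 * β)) * nrm h ^ (2 * β)) :=
          (mul_le_mul_of_nonneg_left hle hV0).trans
            (mul_le_mul_of_nonneg_right (by linarith) (by positivity))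
      _ = (V + 1) * (1 / (2 - 2 * β) + 1 / (2 * β)) * nrm h ^ (2 * β) := by ring
end
end

section
/- Let d ≥ 1. (i) For every α ∈ (0,1) there is a constant C > 0 depending only on α and d such that ∫_{ℝ^d} |1 − e^{−i⟨h,ξ⟩}|² (1 + ‖ξ‖₂²)^{−(α+d/2)} dξ ≤ C ‖h‖₂^{2α} for all h ∈ ℝ^d. (ii) For α = 1 there are constants C > 0 and δ ∈ (0,1), depending only on d, such that ∫_{ℝ^d} |1 − e^{−i⟨h,ξ⟩}|² (1 + ‖ξ‖₂²)^{−(1+d/2)} dξ ≤ C ‖h‖₂² ln(1/‖h‖₂) for all h ∈ ℝ^d with 0 < ‖h‖₂ ≤ δ. -/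
open MeasureTheory

noncomputable section

/-- The radial function that dominates `|1 − e^{−i⟨h,ξ⟩}|² (1+‖ξ‖²)^{−s}` when `‖h‖ = r`
and `‖ξ‖ = t`. -/
def radialMajorant (s r t : ℝ) : ℝ := min 4 (r ^ 2 * t ^ 2) * (1 + t ^ 2) ^ (-s)

lemma radialMajorant_nonneg (s r t : ℝ) : 0 ≤ radialMajorant s r t := by
  unfold radialMajorant
  positivity

lemma measurable_radialMajorant (s r : ℝ) : Measurable (radialMajorant s r) := by
  unfold radialMajorant
  fun_prop

lemma norm_one_sub_exp_neg_I_mul_sq_le (x : ℝ) :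
    ‖(1 : ℂ) - Complex.exp (-(Complex.I * (x : ℂ)))‖ ^ 2 ≤ min 4 (x ^ 2) := by
  have hx : -(Complex.I * (x : ℂ)) = Complex.I * ((-x : ℝ) : ℂ) := by push_cast; ring
  rw [hx, norm_sub_rev, le_min_iff]
  constructor
  · have h2 : ‖Complex.exp (Complex.I * ((-x : ℝ) : ℂ)) - 1‖ ≤ 2 := by
      refine (norm_sub_le _ _).trans ?_
      rw [Complex.norm_exp_I_mul_ofReal, norm_one]
      norm_num
    nlinarith [norm_nonneg (Complex.exp (Complex.I * ((-x : ℝ) : ℂ)) - 1)]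
  · have h := Real.norm_exp_I_mul_ofReal_sub_one_le (x := -x)
    calc _ ≤ ‖-x‖ ^ 2 := by gcongr
      _ = x ^ 2 := by simp

lemma integrable_radialMajorant_norm {d : ℕ} {α : ℝ} (hα : 0 < α) (r : ℝ) :
    Integrable fun x : EuclideanSpace ℝ (Fin d) =>
      radialMajorant (α + (d : ℝ) / 2) r ‖x‖ := by
  have h := integrable_rpow_neg_one_add_norm_sq (E := EuclideanSpace ℝ (Fin d)) (μ := volume)
    (r := 2 * α + d) (by simp [hα])
  refine (h.const_mul 4).mono'
    ((measurable_radialMajorant _ _).comp measurable_norm).aestronglyMeasurable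
    (Filter.Eventually.of_forall fun x => ?_)
  rw [Real.norm_of_nonneg (radialMajorant_nonneg _ _ _), radialMajorant,
    show -(2 * α + (d : ℝ)) / 2 = -(α + (d : ℝ) / 2) by ring]
  gcongr
  exact min_le_left _ _

lemma integrableOn_pow_mul_radialMajorant {d : ℕ} (hd : 1 ≤ d) {α : ℝ} (hα : 0 < α) (r : ℝ) :
    IntegrableOn (fun y : ℝ => y ^ (d - 1) * radialMajorant (α + (d : ℝ) / 2) r y)
      (Set.Ioi 0) := by
  have : Nonempty (Fin d) := ⟨⟨0, hd⟩⟩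
  have h := (integrable_fun_norm_addHaar (volume : Measure (EuclideanSpace ℝ (Fin d)))
    (f := radialMajorant (α + (d : ℝ) / 2) r)).1 (integrable_radialMajorant_norm hα r)
  simpa using h

/-- Reduction of the `d`-dimensional integral to a one-dimensional radial integral. -/
lemma integral_le_radial {d : ℕ} (hd : 1 ≤ d) {α : ℝ} (hα : 0 < α) (h : Fin d → ℝ) :
    (∫ ξ : Fin d → ℝ,
      ‖(1 : ℂ) - Complex.exp (-(Complex.I * ((∑ j, h j * ξ j : ℝ) : ℂ)))‖ ^ 2 *
        (1 + ∑ j, ξ j ^ 2) ^ (-(α + (d : ℝ) / 2))) ≤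
    (d * volume.real (Metric.ball (0 : EuclideanSpace ℝ (Fin d)) 1)) *
      ∫ y in Set.Ioi (0 : ℝ), y ^ (d - 1) * radialMajorant (α + (d : ℝ) / 2) (nrm h) y := by
  have : Nonempty (Fin d) := ⟨⟨0, hd⟩⟩
  have hrad := integral_fun_norm_addHaar (volume : Measure (EuclideanSpace ℝ (Fin d)))
    (radialMajorant (α + (d : ℝ) / 2) (nrm h))
  simp only [finrank_euclideanSpace, Fintype.card_fin, nsmul_eq_mul, smul_eq_mul] at hrad
  rw [mul_assoc, ← hrad, ← (PiLp.volume_preserving_ofLp (Fin d)).integral_comp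
    (MeasurableEquiv.toLp 2 (Fin d → ℝ)).symm.measurableEmbedding]
  refine integral_mono_of_nonneg (Filter.Eventually.of_forall fun x => by positivity)
    (integrable_radialMajorant_norm hα _) (Filter.Eventually.of_forall fun x => ?_)
  have hnorm : ‖x‖ ^ 2 = ∑ j, x j ^ 2 := by simp [EuclideanSpace.norm_sq_eq]
  simp only [radialMajorant, hnorm]
  gcongr
  refine (norm_one_sub_exp_neg_I_mul_sq_le _).trans ?_
  gcongr
  rw [nrm, Real.sq_sqrt (by positivity)]
  exact Finset.sum_mul_sq_le_sq_mul_sq _ _ _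

lemma pow_mul_one_add_sq_rpow_le {d : ℕ} (hd : 1 ≤ d) {α y : ℝ} (hα : 0 < α) (hy : 0 < y) :
    y ^ (d - 1) * (1 + y ^ 2) ^ (-(α + (d : ℝ) / 2)) ≤ y ^ (-1 - 2 * α) := by
  have hle : (1 + y ^ 2) ^ (-(α + (d : ℝ) / 2)) ≤ (y ^ 2) ^ (-(α + (d : ℝ) / 2)) := by
    apply Real.rpow_le_rpow_of_nonpos (by positivity) (by linarith)
    have : (0 : ℝ) ≤ d := by positivity
    linarith
  calc _ ≤ y ^ (d - 1) * (y ^ 2) ^ (-(α + (d : ℝ) / 2)) := by gcongr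
    _ = y ^ (-1 - 2 * α) := by
      rw [← Real.rpow_natCast y (d - 1), ← Real.rpow_natCast y 2, ← Real.rpow_mul hy.le,
        ← Real.rpow_add hy]
      push_cast [hd]
      ring_nf

lemma integral_Ioi_inv_radialMajorant_le {d : ℕ} (hd : 1 ≤ d) {α r : ℝ} (hα : 0 < α)
    (hr : 0 < r) :
    ∫ y in Set.Ioi r⁻¹, y ^ (d - 1) * radialMajorant (α + (d : ℝ) / 2) r y ≤
      2 / α * r ^ (2 * α) := by
  have hlt : -1 - 2 * α < -1 := by linarith
  have hr' : 0 < r⁻¹ := inv_pos.2 hr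
  calc _ ≤ ∫ y in Set.Ioi r⁻¹, 4 * y ^ (-1 - 2 * α) := by
        refine setIntegral_mono_on
          ((integrableOn_pow_mul_radialMajorant hd hα r).mono_set (Set.Ioi_subset_Ioi hr'.le))
          ((integrableOn_Ioi_rpow_of_lt hlt hr').const_mul 4) measurableSet_Ioi fun y hy => ?_
        have hy0 : 0 < y := hr'.trans hy
        calc _ ≤ y ^ (d - 1) * (4 * (1 + y ^ 2) ^ (-(α + (d : ℝ) / 2))) := by
              unfold radialMajorant
              gcongr
              exact min_le_left _ _
          _ = 4 * (y ^ (d - 1) * (1 + y ^ 2) ^ (-(α + (d : ℝ) / 2))) := by ring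
          _ ≤ _ := by gcongr; exact pow_mul_one_add_sq_rpow_le hd hα hy0
    _ = 2 / α * r ^ (2 * α) := by
        rw [integral_const_mul, integral_Ioi_rpow_of_lt hlt hr',
          show -1 - 2 * α + 1 = -(2 * α) by ring, Real.inv_rpow hr.le, Real.rpow_neg hr.le, inv_inv]
        field_simp
        ring

lemma pow_mul_radialMajorant_le {d : ℕ} (hd : 1 ≤ d) {α y : ℝ} (hα : 0 < α) (r : ℝ)
    (hy : 0 < y) :
    y ^ (d - 1) * radialMajorant (α + (d : ℝ) / 2) r y ≤ r ^ 2 * y ^ (1 - 2 * α) := by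
  calc _ ≤ y ^ (d - 1) * ((r ^ 2 * y ^ 2) * (1 + y ^ 2) ^ (-(α + (d : ℝ) / 2))) := by
        unfold radialMajorant
        gcongr
        exact min_le_right _ _
    _ = r ^ 2 * (y ^ 2 * (y ^ (d - 1) * (1 + y ^ 2) ^ (-(α + (d : ℝ) / 2)))) := by ring
    _ ≤ r ^ 2 * (y ^ 2 * y ^ (-1 - 2 * α)) := by
        gcongr
        exact pow_mul_one_add_sq_rpow_le hd hα hy
    _ = r ^ 2 * y ^ (1 - 2 * α) := by
        rw [← Real.rpow_natCast y 2, ← Real.rpow_add hy]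
        push_cast
        ring_nf

lemma integral_Ioc_inv_radialMajorant_le {d : ℕ} (hd : 1 ≤ d) {α r : ℝ} (hα : 0 < α)
    (hα1 : α < 1) (hr : 0 < r) :
    ∫ y in Set.Ioc 0 r⁻¹, y ^ (d - 1) * radialMajorant (α + (d : ℝ) / 2) r y ≤
      1 / (2 - 2 * α) * r ^ (2 * α) := by
  have hlt : -1 < 1 - 2 * α := by linarith
  have hr' : 0 < r⁻¹ := inv_pos.2 hr
  have hint : IntegrableOn (fun y : ℝ => y ^ (1 - 2 * α)) (Set.Ioc 0 r⁻¹) :=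
    (intervalIntegrable_iff_integrableOn_Ioc_of_le hr'.le).1
      (intervalIntegral.intervalIntegrable_rpow' hlt)
  calc _ ≤ ∫ y in Set.Ioc 0 r⁻¹, r ^ 2 * y ^ (1 - 2 * α) :=
        setIntegral_mono_on
          ((integrableOn_pow_mul_radialMajorant hd hα r).mono_set Set.Ioc_subset_Ioi_self)
          (hint.const_mul _) measurableSet_Ioc fun y hy => pow_mul_radialMajorant_le hd hα r hy.1
    _ = 1 / (2 - 2 * α) * r ^ (2 * α) := by
        rw [integral_const_mul, ← intervalIntegral.integral_of_le hr'.le,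
          integral_rpow (Or.inl hlt), show 1 - 2 * α + 1 = 2 - 2 * α by ring,
          Real.zero_rpow (by linarith), sub_zero, Real.inv_rpow hr.le, Real.rpow_sub hr]
        have : r ^ (2 : ℝ) = r ^ 2 := Real.rpow_natCast r 2
        rw [this]
        field_simp

lemma integral_Ioc_inv_radialMajorant_one_le {d : ℕ} (hd : 1 ≤ d) {r : ℝ} (hr : 0 < r)
    (hr1 : r ≤ 1) :
    ∫ y in Set.Ioc 0 r⁻¹, y ^ (d - 1) * radialMajorant (1 + (d : ℝ) / 2) r y ≤
      r ^ 2 * (1 + Real.log (1 / r)) := by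
  have hr' : 1 ≤ r⁻¹ := (one_le_inv₀ hr).2 hr1
  have hI := integrableOn_pow_mul_radialMajorant hd one_pos r
  have hI0 := hI.mono_set (Set.Ioc_subset_Ioi_self (a := 1))
  have hI1 := hI.mono_set
    ((Set.Ioc_subset_Ioi_self (a := r⁻¹)).trans (Set.Ioi_subset_Ioi zero_le_one))
  rw [← Set.Ioc_union_Ioc_eq_Ioc zero_le_one hr',
    setIntegral_union (Set.Ioc_disjoint_Ioc_of_le le_rfl) measurableSet_Ioc hI0 hI1, mul_add]
  gcongr
  · calc _ ≤ ∫ _ in Set.Ioc (0 : ℝ) 1, r ^ 2 * 1 := by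
          refine setIntegral_mono_on hI0 (by simp) measurableSet_Ioc fun y hy => ?_
          have hy0 : 0 < y := hy.1
          have hw : (1 + y ^ 2) ^ (-(1 + (d : ℝ) / 2)) ≤ 1 :=
            Real.rpow_le_one_of_one_le_of_nonpos (by nlinarith)
              (by have : (0 : ℝ) ≤ d := by positivity
                  linarith)
          calc _ ≤ 1 * ((r ^ 2 * y ^ 2) * 1) := by
                unfold radialMajorant
                gcongr
                · exact pow_le_one₀ hy0.le hy.2
                · exact min_le_right _ _
            _ = r ^ 2 * y ^ 2 := by ring
            _ ≤ r ^ 2 * 1 := by gcongr; exact pow_le_one₀ hy0.le hy.2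
      _ = r ^ 2 * 1 := by simp
  · have hint : IntegrableOn (fun y : ℝ => y⁻¹) (Set.Ioc 1 r⁻¹) := by
      rw [← intervalIntegrable_iff_integrableOn_Ioc_of_le hr']
      exact intervalIntegrable_inv_iff.2
        (Or.inr (Set.notMem_uIcc_of_lt one_pos (inv_pos.2 hr)))
    calc _ ≤ ∫ y in Set.Ioc 1 r⁻¹, r ^ 2 * y⁻¹ := by
          refine setIntegral_mono_on hI1 (hint.const_mul _) measurableSet_Ioc fun y hy => ?_
          have hy0 : 0 < y := one_pos.trans hy.1
          have h := pow_mul_radialMajorant_le hd one_pos r hy0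
          rwa [show (1 : ℝ) - 2 * 1 = -1 by norm_num, Real.rpow_neg_one] at h
      _ = r ^ 2 * Real.log (1 / r) := by
          rw [integral_const_mul, ← intervalIntegral.integral_of_le hr',
            integral_inv_of_pos one_pos (inv_pos.2 hr), div_one, one_div]

lemma integral_Ioi_radialMajorant_eq_add {d : ℕ} (hd : 1 ≤ d) {α r : ℝ} (hα : 0 < α)
    (hr : 0 < r) :
    ∫ y in Set.Ioi (0 : ℝ), y ^ (d - 1) * radialMajorant (α + (d : ℝ) / 2) r y =
      (∫ y in Set.Ioc 0 r⁻¹, y ^ (d - 1) * radialMajorant (α + (d : ℝ) / 2) r y) +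
        ∫ y in Set.Ioi r⁻¹, y ^ (d - 1) * radialMajorant (α + (d : ℝ) / 2) r y := by
  have hr' : 0 < r⁻¹ := inv_pos.2 hr
  have hI := integrableOn_pow_mul_radialMajorant hd hα r
  rw [← Set.Ioc_union_Ioi_eq_Ioi hr'.le, setIntegral_union (Set.Ioc_disjoint_Ioi le_rfl)
    measurableSet_Ioi (hI.mono_set Set.Ioc_subset_Ioi_self)
    (hI.mono_set (Set.Ioi_subset_Ioi hr'.le))]

/-- weighted integrals of `|1 − e^{−i⟨h,ξ⟩}|²`.
(i) For `α ∈ (0,1)`: `∫ |1 − e^{−i⟨h,ξ⟩}|² (1+‖ξ‖₂²)^{−(α+d/2)} dξ ≤ C ‖h‖₂^{2α}` for all `h`.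
(ii) For `α = 1`: the same integral is `≤ C ‖h‖₂² ln(1/‖h‖₂)` for all small `h ≠ 0`. -/
theorem stmt8 (d : ℕ) (hd : 1 ≤ d) :
    (∀ α : ℝ, 0 < α → α < 1 → ∃ C : ℝ, 0 < C ∧
      ∀ h : Fin d → ℝ,
        (∫ ξ : Fin d → ℝ,
            ‖(1 : ℂ) - Complex.exp (-(Complex.I * ((∑ j, h j * ξ j : ℝ) : ℂ)))‖ ^ 2 *
              (1 + ∑ j, ξ j ^ 2) ^ (-(α + (d : ℝ) / 2))) ≤
          C * nrm h ^ (2 * α)) ∧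
    (∃ C : ℝ, 0 < C ∧ ∃ δ : ℝ, 0 < δ ∧ δ < 1 ∧
      ∀ h : Fin d → ℝ, 0 < nrm h → nrm h ≤ δ →
        (∫ ξ : Fin d → ℝ,
            ‖(1 : ℂ) - Complex.exp (-(Complex.I * ((∑ j, h j * ξ j : ℝ) : ℂ)))‖ ^ 2 *
              (1 + ∑ j, ξ j ^ 2) ^ (-((1 : ℝ) + (d : ℝ) / 2))) ≤
          C * (nrm h ^ (2 : ℕ) * Real.log (1 / nrm h))) := by
  have hd0 : (0 : ℝ) < d := by exact_mod_cast hd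
  have hball : 0 < volume.real (Metric.ball (0 : EuclideanSpace ℝ (Fin d)) 1) :=
    ENNReal.toReal_pos (Metric.measure_ball_pos _ _ one_pos).ne' measure_ball_lt_top.ne
  constructor
  · intro α hα hα1
    have h1α : 0 < 2 - 2 * α := by linarith
    refine ⟨(d * volume.real (Metric.ball (0 : EuclideanSpace ℝ (Fin d)) 1)) *
      (1 / (2 - 2 * α) + 2 / α), by positivity, fun h => ?_⟩
    refine (integral_le_radial hd hα h).trans ?_
    rw [mul_assoc _ (1 / (2 - 2 * α) + 2 / α)]
    gcongr
    have hnn : 0 ≤ nrm h := Real.sqrt_nonneg _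
    rcases hnn.eq_or_lt with h0 | h0
    · have hmaj : ∀ y, radialMajorant (α + (d : ℝ) / 2) 0 y = 0 := by simp [radialMajorant]
      rw [← h0, Real.zero_rpow (by positivity)]
      simp [hmaj]
    · rw [integral_Ioi_radialMajorant_eq_add hd hα h0, add_mul]
      exact add_le_add (integral_Ioc_inv_radialMajorant_le hd hα hα1 h0)
        (integral_Ioi_inv_radialMajorant_le hd hα h0)
  · refine ⟨(d * volume.real (Metric.ball (0 : EuclideanSpace ℝ (Fin d)) 1)) * 4, by positivity,
      Real.exp (-1), Real.exp_pos _, Real.exp_lt_one_iff.2 (by norm_num), fun h h0 hδ => ?_⟩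
    refine (integral_le_radial hd one_pos h).trans ?_
    rw [mul_assoc _ 4]
    gcongr
    have h1 : nrm h ≤ 1 := hδ.trans (Real.exp_le_one_iff.2 (by norm_num))
    have hlog : 1 ≤ Real.log (1 / nrm h) := by
      have := (Real.log_le_iff_le_exp h0).2 hδ
      rw [one_div, Real.log_inv]
      linarith
    rw [integral_Ioi_radialMajorant_eq_add hd one_pos h0]
    have hIoi := integral_Ioi_inv_radialMajorant_le hd one_pos h0
    rw [show (2 : ℝ) * 1 = (2 : ℕ) by norm_num, Real.rpow_natCast] at hIoi
    have hIoc := integral_Ioc_inv_radialMajorant_one_le hd h0 h1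
    nlinarith [sq_nonneg (nrm h)]
end
end
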